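/- Let γ > 0, ρ ≤ 0, α ∈ ℝ, β ≥ 0, and let U be a random variable uniformly distributed on [0,1]. If 1 − α − 2γ > 0, then E[ U^{−α} · K_{γ,ρ}(1/U)² · (−log U)^{β} ] is finite. -/

import Mathlib

open MeasureTheory Filter Real

noncomputable section

/-- `K_{γ,ρ}(x) = ∫₁^x u^{γ−1} (∫₁^u s^{ρ−1} ds) du`. -/
def Kfun (γ ρ x : ℝ) : ℝ :=
  ∫ u in (1:ℝ)..x, u ^ (γ - 1) * ∫ s in (1:ℝ)..u, s ^ (ρ - 1)

theorem aux_intble {f : ℝ → ℝ} (hf : ContinuousOn f (Set.Ioi 0)) {x : ℝ} (hx : 0 < x) :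
    IntervalIntegrable f volume 1 x := by
  apply ContinuousOn.intervalIntegrable
  apply hf.mono
  intro y hy
  rw [Set.mem_uIcc] at hy
  simp only [Set.mem_Ioi]
  rcases hy with h | h <;> linarith [h.1]

theorem aux_cont {f : ℝ → ℝ} (hf : ContinuousOn f (Set.Ioi 0)) :
    ContinuousOn (fun x => ∫ u in (1:ℝ)..x, f u) (Set.Ioi 0) := by
  intro x hx
  have h := intervalIntegral.integral_hasDerivAt_right (aux_intble hf hx)
    (hf.stronglyMeasurableAtFilter isOpen_Ioi x hx) (hf.continuousAt (Ioi_mem_nhds hx))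
  exact h.continuousAt.continuousWithinAt

theorem aux_rpow (r : ℝ) : ContinuousOn (fun x : ℝ => x ^ r) (Set.Ioi 0) := by
  intro x hx
  exact (Real.continuousAt_rpow_const x r (Or.inl (ne_of_gt hx))).continuousWithinAt

theorem aux_K_integrand (γ ρ : ℝ) :
    ContinuousOn (fun u : ℝ => u ^ (γ - 1) * ∫ s in (1:ℝ)..u, s ^ (ρ - 1)) (Set.Ioi 0) :=
  (aux_rpow _).mul (aux_cont (aux_rpow _))

theorem aux_inner {ρ u : ℝ} (hρ : ρ ≤ 0) (hu : 1 ≤ u) :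
    0 ≤ (∫ s in (1:ℝ)..u, s ^ (ρ - 1)) ∧ (∫ s in (1:ℝ)..u, s ^ (ρ - 1)) ≤ Real.log u := by
  have hu0 : 0 < u := by linarith
  constructor
  · apply intervalIntegral.integral_nonneg hu
    intro s hs
    exact Real.rpow_nonneg (by linarith [hs.1]) _
  · have h1 : (∫ s in (1:ℝ)..u, s ^ (ρ - 1)) ≤ ∫ s in (1:ℝ)..u, s ^ (-1 : ℝ) := by
      apply intervalIntegral.integral_mono_on hu (aux_intble (aux_rpow _) hu0)
        (aux_intble (aux_rpow _) hu0)
      intro s hs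
      exact Real.rpow_le_rpow_of_exponent_le hs.1 (by linarith)
    have h2 : (∫ s in (1:ℝ)..u, s ^ (-1 : ℝ)) = Real.log u := by
      simp only [Real.rpow_neg_one]
      rw [integral_inv_of_pos one_pos hu0, div_one]
    linarith

theorem aux_K {γ ρ ε x : ℝ} (hγ : 0 < γ) (hρ : ρ ≤ 0) (hε : 0 < ε) (hx : 1 ≤ x) :
    0 ≤ Kfun γ ρ x ∧ Kfun γ ρ x ≤ x ^ (γ + ε) / (ε * (γ + ε)) := by
  have hx0 : 0 < x := by linarith
  constructor
  · apply intervalIntegral.integral_nonneg hx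
    intro s hs
    exact mul_nonneg (Real.rpow_nonneg (by linarith [hs.1]) _) (aux_inner hρ hs.1).1
  · have h1 : Kfun γ ρ x ≤ ∫ u in (1:ℝ)..x, u ^ (γ + ε - 1) / ε := by
      apply intervalIntegral.integral_mono_on hx (aux_intble (aux_K_integrand _ _) hx0)
        (aux_intble ((aux_rpow _).div_const _) hx0)
      intro u hu
      have hu0 : 0 < u := by linarith [hu.1]
      have h3 : (∫ s in (1:ℝ)..u, s ^ (ρ - 1)) ≤ u ^ ε / ε :=
        (aux_inner hρ hu.1).2.trans (Real.log_le_rpow_div hu0.le hε)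
      calc u ^ (γ - 1) * (∫ s in (1:ℝ)..u, s ^ (ρ - 1)) ≤ u ^ (γ - 1) * (u ^ ε / ε) :=
            mul_le_mul_of_nonneg_left h3 (Real.rpow_nonneg hu0.le _)
        _ = u ^ (γ + ε - 1) / ε := by
            rw [← mul_div_assoc, ← Real.rpow_add hu0]
            ring_nf
    have h2 : (∫ u in (1:ℝ)..x, u ^ (γ + ε - 1) / ε)
        = (x ^ (γ + ε) - 1) / (γ + ε) / ε := by
      rw [intervalIntegral.integral_div, integral_rpow (Or.inl (by linarith))]
      simp
    have h4 : (x ^ (γ + ε) - 1) / (γ + ε) / ε ≤ x ^ (γ + ε) / (ε * (γ + ε)) := by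
      rw [div_div, mul_comm (γ + ε) ε]
      gcongr
      linarith
    linarith

/-- Lemma 3 (ii): if `1 − α − 2γ > 0` then `E[U^{−α} K_{γ,ρ}(1/U)² (−log U)^β] < ∞`
for `U` uniform on `[0,1]`. -/
theorem uniform_K_sq_moment_finite
    (γ ρ α β : ℝ) (hγ : 0 < γ) (hρ : ρ ≤ 0) (hβ : 0 ≤ β) (hαγ : 0 < 1 - α - 2 * γ)
    {Ω : Type*} [MeasurableSpace Ω] (P : Measure Ω) [IsProbabilityMeasure P]
    (U : Ω → ℝ) (hUmeas : Measurable U)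
    (hUlaw : Measure.map U P = volume.restrict (Set.Icc (0:ℝ) 1)) :
    Integrable (fun ω => U ω ^ (-α) * Kfun γ ρ (1 / U ω) ^ 2 * (-Real.log (U ω)) ^ β) P := by
  suffices H : Integrable (fun u : ℝ => u ^ (-α) * Kfun γ ρ (1 / u) ^ 2 * (-Real.log u) ^ β)
      (Measure.map U P) from H.comp_measurable hUmeas
  rw [hUlaw, ← restrict_Ioc_eq_restrict_Icc]
  obtain ⟨ε, hε, hεe⟩ : ∃ ε : ℝ, 0 < ε ∧ ε * (2 + β) = (1 - α - 2 * γ) / 2 :=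
    ⟨(1 - α - 2 * γ) / 2 / (2 + β), by positivity, by field_simp⟩
  have hr : -1 < -α - 2 * γ - ε * (2 + β) := by rw [hεe]; linarith
  have hint : Integrable (fun u : ℝ => (1 / (ε * (γ + ε))) ^ 2 * (1 / ε) ^ β *
      u ^ (-α - 2 * γ - ε * (2 + β))) (volume.restrict (Set.Ioc (0:ℝ) 1)) := by
    apply Integrable.const_mul
    exact (intervalIntegral.intervalIntegrable_rpow' (a := 0) (b := 1) hr).1
  refine hint.mono' ?_ ?_
  · apply ContinuousOn.aestronglyMeasurable _ measurableSet_Ioc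
    have hsub : Set.Ioc (0:ℝ) 1 ⊆ Set.Ioi 0 := fun x hx => hx.1
    have hK : ContinuousOn (Kfun γ ρ) (Set.Ioi 0) := aux_cont (aux_K_integrand γ ρ)
    refine (((aux_rpow _).mono hsub).mul (ContinuousOn.pow ?_ 2)).mul ?_
    · refine hK.comp (f := fun u : ℝ => 1 / u) ?_ ?_
      · exact continuousOn_const.div continuousOn_id (fun x hx => ne_of_gt hx.1)
      · intro x hx
        exact one_div_pos.mpr hx.1
    · refine ContinuousOn.rpow_const ?_ (fun x _ => Or.inr hβ)
      exact (Real.continuousOn_log.mono (fun x hx => ne_of_gt hx.1)).neg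
  · rw [ae_restrict_iff' measurableSet_Ioc]
    refine Eventually.of_forall fun u hu => ?_
    obtain ⟨hu0, hu1⟩ := hu
    have hx : 1 ≤ 1 / u := by rw [le_div_iff₀ hu0]; linarith
    obtain ⟨hK0, hK1⟩ := aux_K hγ hρ hε hx
    have hlog0 : 0 ≤ -Real.log u := by linarith [Real.log_nonpos hu0.le hu1]
    have hlog1 : -Real.log u ≤ u ^ (-ε) / ε := by
      have := Real.log_le_rpow_div (x := 1 / u) (by positivity) hε
      rwa [one_div, Real.log_inv, Real.inv_rpow hu0.le, ← Real.rpow_neg hu0.le] at this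
    have hK1' : Kfun γ ρ (1 / u) ≤ u ^ (-(γ + ε)) / (ε * (γ + ε)) := by
      rwa [one_div, Real.inv_rpow hu0.le, ← Real.rpow_neg hu0.le, ← one_div] at hK1
    have hua : 0 ≤ u ^ (-α) := Real.rpow_nonneg hu0.le _
    rw [Real.norm_of_nonneg (by positivity)]
    calc u ^ (-α) * Kfun γ ρ (1 / u) ^ 2 * (-Real.log u) ^ β
        ≤ u ^ (-α) * (u ^ (-(γ + ε)) / (ε * (γ + ε))) ^ 2 * (u ^ (-ε) / ε) ^ β := by
          gcongr
      _ = _ := by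
          have e1 : (u ^ (-ε) / ε) ^ β = u ^ (-ε * β) * (1 / ε) ^ β := by
            rw [div_eq_mul_one_div, Real.mul_rpow (Real.rpow_nonneg hu0.le _) (by positivity),
              ← Real.rpow_mul hu0.le]
          have e2 : (u ^ (-(γ + ε))) ^ 2 = u ^ (-(γ + ε) * 2) := by
            rw [Real.rpow_mul hu0.le]; norm_cast
          have e3 : u ^ (-α - 2 * γ - ε * (2 + β))
              = u ^ (-α) * u ^ (-(γ + ε) * 2) * u ^ (-ε * β) := by
            rw [← Real.rpow_add hu0, ← Real.rpow_add hu0]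
            ring_nf
          rw [e1, e3, div_pow, e2, div_pow]
          ring
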